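/- arXiv:2412.05673 — 2 statements merged into one kernel-verified Lean document; each statement's English description precedes it below -/
import Mathlib

section
/- For every α > 0 and every ε ∈ ℝ, the Gaussian–GIG mixture integral evaluates in closed form: ∫₀^∞ λ^{-1/2} · exp(−ε²/(2λ)) · exp(−((1+α²)λ + α²/λ)/2) dλ = (√(2π)/√(1+α²)) · exp(−√(1+α²) · √(α²+ε²)). In particular, if ε | λ ~ N(0, λ) and λ has the GIG(a = 1+α², b = α², p = 1) distribution, then the λ-marginalized density of ε is proportional (as a function of ε) to exp(−ℓ_{SPH,α}(ε)), the generalized density associated with the scaled pseudo-Huber loss. -/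
open MeasureTheory Real Set

/-- The scaled pseudo-Huber (SPH) loss. -/
noncomputable def lSPH (α t : ℝ) : ℝ :=
  α * Real.sqrt (α ^ 2 + 1) * (Real.sqrt (1 + t ^ 2 / α ^ 2) - 1)

lemma gig_aux (a b : ℝ) (ha : 0 < a) (hb : 0 < b) :
    ∫ x in Ioi (0 : ℝ), Real.exp (-(1 / 2) * (a * x - b / x) ^ 2) = Real.sqrt (2 * π) / (2 * a) := by
  set f : ℝ → ℝ := fun x => Real.exp (-(1 / 2) * (a * x - b / x) ^ 2) with hf
  have hmeas : Measurable f := by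
    rw [hf]; fun_prop
  have hd : ∀ x ∈ Ioi (0 : ℝ), HasDerivWithinAt (fun x => a * x - b / x) (a + b / x ^ 2) (Ioi 0) x := by
    intro x hx
    have hx0 : x ≠ 0 := ne_of_gt hx
    have h1 := ((hasDerivAt_id x).const_mul a).sub ((hasDerivAt_inv hx0).const_mul b)
    refine (h1.congr_deriv ?_).hasDerivWithinAt
    field_simp
    ring
  have hinj : InjOn (fun x : ℝ => a * x - b / x) (Ioi 0) := by
    apply StrictMonoOn.injOn
    intro x hx y hy hxy
    have hx' : 0 < x := hx
    have : b / y < b / x := by gcongr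
    have : a * x < a * y := by gcongr
    simp only
    linarith
  have himg : (fun x : ℝ => a * x - b / x) '' (Ioi 0) = univ := by
    rw [eq_univ_iff_forall]
    intro y
    have hs : Real.sqrt (y ^ 2 + 4 * a * b) ^ 2 = y ^ 2 + 4 * a * b := Real.sq_sqrt (by positivity)
    have hpos : 0 < y + Real.sqrt (y ^ 2 + 4 * a * b) := by
      have : |y| < Real.sqrt (y ^ 2 + 4 * a * b) := by
        apply Real.lt_sqrt_of_sq_lt
        rw [sq_abs]
        have : 0 < a * b := by positivity
        linarith
      have := neg_abs_le y
      linarith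
    set s := Real.sqrt (y ^ 2 + 4 * a * b)
    refine ⟨(y + s) / (2 * a), by simp only [mem_Ioi]; positivity, ?_⟩
    simp only
    have hne := hpos.ne'
    field_simp
    nlinarith
  have hgi : Integrable (fun u : ℝ => Real.exp (-(1 / 2) * u ^ 2)) := integrable_exp_neg_mul_sq (by norm_num)
  have hg : ∫ u : ℝ, Real.exp (-(1 / 2) * u ^ 2) = Real.sqrt (2 * π) := by
    rw [integral_gaussian]; congr 1; field_simp
  have key := integral_image_eq_integral_abs_deriv_smul measurableSet_Ioi hd hinj
    (fun u : ℝ => Real.exp (-(1 / 2) * u ^ 2))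
  have keyi := integrableOn_image_iff_integrableOn_abs_deriv_smul measurableSet_Ioi hd hinj
    (fun u : ℝ => Real.exp (-(1 / 2) * u ^ 2))
  rw [himg, setIntegral_univ, hg] at key
  rw [himg, integrableOn_univ] at keyi
  have hI := keyi.1 hgi
  have hEq : ∀ x ∈ Ioi (0:ℝ), |a + b / x ^ 2| • Real.exp (-(1 / 2) * (a * x - b / x) ^ 2)
      = a * f x + b / x ^ 2 * f x := by
    intro x hx
    have hx' : 0 < x := hx
    rw [abs_of_pos (by positivity), smul_eq_mul, add_mul]
  have hI2 : IntegrableOn (fun x => a * f x + b / x ^ 2 * f x) (Ioi 0) :=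
    hI.congr_fun hEq measurableSet_Ioi
  have hfa : IntegrableOn (fun x => a * f x) (Ioi 0) := by
    refine Integrable.mono' hI2 (by fun_prop) ?_
    refine (ae_restrict_iff' measurableSet_Ioi).2 (ae_of_all _ fun x hx => ?_)
    have hx' : 0 < x := hx
    have hfx : 0 < f x := Real.exp_pos _
    rw [Real.norm_of_nonneg (by positivity)]
    have : 0 < b / x ^ 2 * f x := by positivity
    linarith
  have hfb : IntegrableOn (fun x => b / x ^ 2 * f x) (Ioi 0) := by
    refine (hI2.sub hfa).congr_fun (fun x _ => ?_) measurableSet_Ioi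
    simp
  rw [setIntegral_congr_fun measurableSet_Ioi hEq, integral_add hfa hfb] at key
  have hd2 : ∀ x ∈ Ioi (0 : ℝ), HasDerivWithinAt (fun x => (b / a) / x) (-((b / a) / x ^ 2)) (Ioi 0) x := by
    intro x hx
    have hx0 : x ≠ 0 := ne_of_gt hx
    have h1 := ((hasDerivAt_inv hx0).const_mul (b / a))
    refine (h1.congr_deriv ?_).hasDerivWithinAt
    field_simp
  have hc : 0 < b / a := by positivity
  have hinj2 : InjOn (fun x : ℝ => (b / a) / x) (Ioi 0) := by
    intro x hx y hy hxy
    have hx' : x ≠ 0 := ne_of_gt hx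
    have hy' : y ≠ 0 := ne_of_gt hy
    simp only at hxy
    field_simp at hxy
    exact hxy.symm
  have himg2 : (fun x : ℝ => (b / a) / x) '' (Ioi 0) = Ioi 0 := by
    ext y
    constructor
    · rintro ⟨x, hx, rfl⟩
      have hx' : 0 < x := hx
      simp only [mem_Ioi]; positivity
    · intro hy
      have hy' : 0 < y := hy
      refine ⟨(b / a) / y, by simp only [mem_Ioi]; positivity, ?_⟩
      simp only
      field_simp
  have key2 := integral_image_eq_integral_abs_deriv_smul measurableSet_Ioi hd2 hinj2 f
  rw [himg2] at key2
  have hEq2 : ∀ x ∈ Ioi (0:ℝ), |-((b / a) / x ^ 2)| • f ((b / a) / x) = a⁻¹ * (b / x ^ 2 * f x) := by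
    intro x hx
    have hx' : 0 < x := hx
    rw [abs_neg, abs_of_pos (by positivity), smul_eq_mul]
    have : f ((b / a) / x) = f x := by
      simp only [hf]
      congr 1
      field_simp
      ring
    rw [this]
    field_simp
  rw [setIntegral_congr_fun measurableSet_Ioi hEq2, integral_const_mul] at key2
  rw [integral_const_mul] at key
  rw [eq_inv_mul_iff_mul_eq₀ ha.ne'] at key2
  rw [eq_div_iff (by positivity)]
  linarith

lemma gig_main (a b : ℝ) (ha : 0 < a) (hb : 0 < b) :
    ∫ l in Ioi (0 : ℝ), l ^ (-(1 : ℝ) / 2) * Real.exp (-((a ^ 2 * l + b ^ 2 / l) / 2))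
      = Real.sqrt (2 * π) / a * Real.exp (-(a * b)) := by
  rw [← integral_comp_rpow_Ioi_of_pos (p := 2) (by norm_num)]
  have h : ∀ x ∈ Ioi (0:ℝ), ((2:ℝ) * x ^ ((2:ℝ) - 1)) •
      ((x ^ (2:ℝ)) ^ (-(1 : ℝ) / 2) * Real.exp (-((a ^ 2 * x ^ (2:ℝ) + b ^ 2 / x ^ (2:ℝ)) / 2)))
      = 2 * Real.exp (-(a * b)) * Real.exp (-(1 / 2) * (a * x - b / x) ^ 2) := by
    intro x hx
    have hx' : 0 < x := hx
    rw [← Real.rpow_mul hx'.le, smul_eq_mul, mul_assoc (2:ℝ) (Real.exp _), ← Real.exp_add]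
    have e1 : x ^ ((2:ℝ) - 1) = x := by norm_num
    have e2 : x ^ ((2:ℝ) * (-1 / 2)) = x⁻¹ := by
      rw [show (2:ℝ) * (-1 / 2) = -1 by norm_num, Real.rpow_neg_one]
    rw [e1, e2, Real.rpow_two]
    have e3 : -((a ^ 2 * x ^ 2 + b ^ 2 / x ^ 2) / 2) = -(a * b) + -(1 / 2) * (a * x - b / x) ^ 2 := by
      field_simp
      ring
    rw [e3]
    field_simp
  rw [setIntegral_congr_fun measurableSet_Ioi h, integral_const_mul, gig_aux a b ha hb]
  field_simp

/-- For every `α > 0` and every `ε`, the Gaussian–GIG mixture integral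
evaluates in closed form, and in particular the `λ`-marginalized density of `ε` is
proportional (as a function of `ε`) to `exp (-lSPH α ε)`. -/
theorem gaussian_gig_mixture_closed_form (α : ℝ) (hα : 0 < α) :
    (∀ ε : ℝ,
      (∫ l in Ioi (0 : ℝ),
          l ^ (-(1 : ℝ) / 2) * Real.exp (-(ε ^ 2) / (2 * l)) *
            Real.exp (-(((1 + α ^ 2) * l + α ^ 2 / l) / 2)))
        = (Real.sqrt (2 * π) / Real.sqrt (1 + α ^ 2)) *
            Real.exp (-(Real.sqrt (1 + α ^ 2) * Real.sqrt (α ^ 2 + ε ^ 2)))) ∧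
    (∃ C : ℝ, 0 < C ∧ ∀ ε : ℝ,
      (∫ l in Ioi (0 : ℝ),
          l ^ (-(1 : ℝ) / 2) * Real.exp (-(ε ^ 2) / (2 * l)) *
            Real.exp (-(((1 + α ^ 2) * l + α ^ 2 / l) / 2)))
        = C * Real.exp (-(lSPH α ε))) := by
  have main : ∀ ε : ℝ,
      (∫ l in Ioi (0 : ℝ),
          l ^ (-(1 : ℝ) / 2) * Real.exp (-(ε ^ 2) / (2 * l)) *
            Real.exp (-(((1 + α ^ 2) * l + α ^ 2 / l) / 2)))
        = (Real.sqrt (2 * π) / Real.sqrt (1 + α ^ 2)) *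
            Real.exp (-(Real.sqrt (1 + α ^ 2) * Real.sqrt (α ^ 2 + ε ^ 2))) := by
    intro ε
    rw [← gig_main _ _ (by positivity) (by positivity)]
    refine setIntegral_congr_fun measurableSet_Ioi fun l hl => ?_
    have hl' : 0 < l := hl
    rw [mul_assoc, ← Real.exp_add, Real.sq_sqrt (by positivity), Real.sq_sqrt (by positivity)]
    congr 2
    field_simp
    ring
  refine ⟨main, Real.sqrt (2 * π) / Real.sqrt (1 + α ^ 2) *
    Real.exp (-(α * Real.sqrt (1 + α ^ 2))), by positivity, fun ε => ?_⟩
  rw [main ε, mul_assoc, ← Real.exp_add]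
  congr 2
  have h : Real.sqrt (α ^ 2 + ε ^ 2) = α * Real.sqrt (1 + ε ^ 2 / α ^ 2) := by
    rw [show α ^ 2 + ε ^ 2 = α ^ 2 * (1 + ε ^ 2 / α ^ 2) by field_simp,
      Real.sqrt_mul (by positivity), Real.sqrt_sq hα.le]
  rw [h, lSPH, add_comm (α ^ 2) 1]
  ring
end

section
/- For each α > 0 let Z(α) = ∫_ℝ exp(−ℓ_{SPH,α}(t)) dt, which is finite and positive, and let f_α(ε) = exp(−ℓ_{SPH,α}(ε))/Z(α) be the generalized error density associated with the SPH loss. Then for every fixed ε ∈ ℝ, f_α(ε) → (1/2)·exp(−|ε|) as α → 0⁺; that is, the SPH generalized density converges pointwise to the standard Laplace density as α tends to 0 from the right. -/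
open MeasureTheory Real Set Filter

lemma lSPH_eq {α : ℝ} (hα : 0 < α) (t : ℝ) :
    lSPH α t = Real.sqrt (α ^ 2 + 1) * (Real.sqrt (α ^ 2 + t ^ 2) - α) := by
  have h : Real.sqrt (α ^ 2 + t ^ 2) = α * Real.sqrt (1 + t ^ 2 / α ^ 2) := by
    have h1 : α ^ 2 + t ^ 2 = α ^ 2 * (1 + t ^ 2 / α ^ 2) := by field_simp
    rw [h1, Real.sqrt_mul (by positivity), Real.sqrt_sq hα.le]
  rw [h, lSPH]; ring

lemma lSPH_ge {α : ℝ} (hα : 0 < α) (t : ℝ) : |t| - α ≤ lSPH α t := by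
  rw [lSPH_eq hα]
  have h1 : 1 ≤ Real.sqrt (α ^ 2 + 1) := Real.one_le_sqrt.2 (by nlinarith)
  have h2 : |t| ≤ Real.sqrt (α ^ 2 + t ^ 2) := Real.abs_le_sqrt (by nlinarith)
  have h3 : α ≤ Real.sqrt (α ^ 2 + t ^ 2) := Real.le_sqrt_of_sq_le (by nlinarith [sq_nonneg t])
  nlinarith [mul_nonneg (sub_nonneg.2 h1) (sub_nonneg.2 h3)]

lemma laplace_integral : ∫ t : ℝ, Real.exp (-|t|) = 2 := by
  rw [integral_comp_abs (f := fun x => Real.exp (-x)), integral_exp_neg_Ioi_zero, mul_one]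

lemma laplace_integrable : Integrable (fun t : ℝ => Real.exp (-|t|)) := by
  by_contra h
  have := integral_undef h
  rw [laplace_integral] at this
  norm_num at this

lemma lSPH_meas (α : ℝ) : Continuous (fun t : ℝ => Real.exp (-(lSPH α t))) := by
  unfold lSPH; fun_prop

lemma lSPH_bound {α : ℝ} (hα : 0 < α) (t : ℝ) :
    ‖Real.exp (-(lSPH α t))‖ ≤ Real.exp α * Real.exp (-|t|) := by
  rw [Real.norm_eq_abs, Real.abs_exp, ← Real.exp_add]
  exact Real.exp_le_exp.2 (by linarith [lSPH_ge hα t])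

lemma lSPH_tendsto (t : ℝ) :
    Tendsto (fun α : ℝ => Real.exp (-(lSPH α t))) (nhdsWithin 0 (Ioi 0))
      (nhds (Real.exp (-|t|))) := by
  have h : Continuous (fun α : ℝ =>
      Real.exp (-(Real.sqrt (α ^ 2 + 1) * (Real.sqrt (α ^ 2 + t ^ 2) - α)))) := by fun_prop
  have h2 := (h.tendsto 0).mono_left (nhdsWithin_le_nhds (s := Ioi 0))
  simp only [ne_eq, OfNat.ofNat_ne_zero, not_false_eq_true, zero_pow, zero_add, Real.sqrt_one,
    one_mul, sub_zero, Real.sqrt_sq_eq_abs] at h2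
  refine h2.congr' ?_
  filter_upwards [self_mem_nhdsWithin] with α hα
  rw [lSPH_eq hα]

/-- For each `α > 0` the SPH generalized density
`f_α(ε) = exp(-lSPH α ε) / Z(α)` (with `Z(α) = ∫ exp(-lSPH α t) dt` finite and positive)
converges pointwise, as `α → 0⁺`, to the standard Laplace density `(1/2) exp(-|ε|)`. -/
theorem sph_density_tendsto_laplace (ε : ℝ) :
    (∀ α : ℝ, 0 < α →
      Integrable (fun t : ℝ => Real.exp (-(lSPH α t))) ∧
        0 < ∫ t : ℝ, Real.exp (-(lSPH α t))) ∧
    Tendsto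
      (fun α : ℝ => Real.exp (-(lSPH α ε)) / ∫ t : ℝ, Real.exp (-(lSPH α t)))
      (nhdsWithin 0 (Ioi 0)) (nhds ((1 / 2) * Real.exp (-|ε|))) := by
  constructor
  · intro α hα
    have hi : Integrable (fun t : ℝ => Real.exp (-(lSPH α t))) :=
      (laplace_integrable.const_mul (Real.exp α)).mono' (lSPH_meas α).aestronglyMeasurable
        (Eventually.of_forall (lSPH_bound hα))
    exact ⟨hi, integral_exp_pos hi⟩
  · have hZ : Tendsto (fun α : ℝ => ∫ t : ℝ, Real.exp (-(lSPH α t)))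
        (nhdsWithin 0 (Ioi 0)) (nhds (∫ t : ℝ, Real.exp (-|t|))) := by
      refine tendsto_integral_filter_of_dominated_convergence
        (fun t => Real.exp 1 * Real.exp (-|t|))
        (Eventually.of_forall fun α => (lSPH_meas α).aestronglyMeasurable) ?_
        (laplace_integrable.const_mul _) (Eventually.of_forall lSPH_tendsto)
      filter_upwards [Ioo_mem_nhdsGT (zero_lt_one' ℝ)] with α hα
      refine Eventually.of_forall fun t => (lSPH_bound hα.1 t).trans ?_
      exact mul_le_mul_of_nonneg_right (Real.exp_le_exp.2 hα.2.le) (Real.exp_pos _).le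
    rw [laplace_integral] at hZ
    have h := (lSPH_tendsto ε).div hZ two_ne_zero
    have e : (1 / 2) * Real.exp (-|ε|) = Real.exp (-|ε|) / 2 := by ring
    rw [e]
    exact h
end
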